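/- Let P be a set of primes with natural density δ ∈ (0,1] and let η > 0. Then for every ε ∈ (0,1) there exist c > 0 and Q₀ ≥ 3 such that for all Q ≥ Q₀ one has ∑_{q ≤ Q, q squarefree, every prime factor of q lies in P} η^{ω(q)} ≥ c·Q·(log Q)^{(1−ε)δη − 1}, where ω(q) denotes the number of distinct prime factors of q. -/

import Mathlib

open scoped Classical
open Filter

/-!
Fix `0 < β` such that `P` eventually contains at least a proportion `β` of the primes up to `n`.
Only the `q = m * p` are kept where, with `N = ⌊Q ^ κ⌋` for a small `κ`, the prime `p ∈ P` exceeds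
`N` and `m ≤ √Q` is a product of distinct primes of `P` up to `N`; such a factorization is unique.
For fixed `m`, Chebyshev's bound gives `≫ (Q / m) / log Q` choices of `p`. It remains to bound
`∑ η ^ ω(m) / m` from below. Without the constraint `m ≤ √Q` this sum is the Euler product
`∏ (1 + η / p)` over the primes `p ≤ N` in `P`. Under the corresponding probability measure `log m`
has mean at most `η ∑ log p / p`, which is at most `(log √Q) / 2` when `κ` is small, so by Markov's
inequality the constraint keeps at least half of the product. Finally, partial summation compares
`∑ 1 / p` over `P` with `β` times the sum over all primes, so Mertens' lower bound makes the
Euler product `≫ (log N) ^ (β * η)`.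
-/

open Finset
open scoped Nat.Prime

-- The terms at `0` of the outer sums vanish since `x / 0 = 0`; this causes the correction `- a 0`.
theorem sum_div_eq_add_sum_div_mul_add_one (a : ℕ → ℝ) (N : ℕ) :
    ∑ k ∈ range (N + 1), a k / k =
      (∑ k ∈ range (N + 1), a k) / (N + 1) +
        ∑ n ∈ range (N + 1), (∑ k ∈ range (n + 1), a k) / (n * (n + 1)) - a 0 := by
  induction N with
  | zero => simp
  | succ N ih =>
    rw [sum_range_succ, ih, sum_range_succ a (N + 1), sum_range_succ _ (N + 1),
      sum_range_succ a (N + 1)]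
    push_cast
    field

theorem exists_eventually_le_sum_div {a : ℕ → ℝ}
    (ha : ∀ᶠ n in atTop, 0 ≤ ∑ k ∈ range (n + 1), a k) :
    ∃ C : ℝ, ∀ᶠ N in atTop, C ≤ ∑ k ∈ range (N + 1), a k / k := by
  obtain ⟨n₀, hn₀⟩ := eventually_atTop.1 ha
  set F : ℕ → ℝ := fun n => (∑ k ∈ range (n + 1), a k) / (n * (n + 1))
  refine ⟨∑ n ∈ range n₀, F n - a 0, eventually_atTop.2 ⟨n₀, fun N hN => ?_⟩⟩
  have boundary : 0 ≤ (∑ k ∈ range (N + 1), a k) / ((N : ℝ) + 1) :=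
    div_nonneg (hn₀ N hN) (by positivity)
  have tail : 0 ≤ ∑ n ∈ Ico n₀ (N + 1), F n :=
    sum_nonneg fun n hn => div_nonneg (hn₀ n (mem_Ico.1 hn).1) (by positivity)
  rw [sum_div_eq_add_sum_div_mul_add_one, ← sum_range_add_sum_Ico F (by lia : n₀ ≤ N + 1)]
  linarith

theorem sum_div_le_mul_two_add_log {a : ℕ → ℝ} {C : ℝ} (hC : 0 ≤ C) (ha₀ : a 0 = 0)
    (ha : ∀ n : ℕ, ∑ k ∈ range (n + 1), a k ≤ C * n) (N : ℕ) :
    ∑ k ∈ range (N + 1), a k / k ≤ C * (2 + Real.log N) := by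
  have boundary : (∑ k ∈ range (N + 1), a k) / (N + 1) ≤ C := by
    rw [div_le_iff₀ (by positivity)]
    linarith [ha N]
  have telescoped : ∑ n ∈ range (N + 1), (∑ k ∈ range (n + 1), a k) / ((n : ℝ) * (n + 1)) ≤
      C * harmonic N := by
    rw [sum_range_succ', harmonic]
    push_cast
    rw [mul_sum, zero_mul, div_zero, add_zero]
    refine sum_le_sum fun n _ => ?_
    calc (∑ k ∈ range (n + 1 + 1), a k) / (((n : ℝ) + 1) * (n + 1 + 1))
        ≤ C * (n + 1 + 1) / (((n : ℝ) + 1) * (n + 1 + 1)) := by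
          gcongr
          have := ha (n + 1)
          push_cast at this
          linarith
      _ = C * ((n : ℝ) + 1)⁻¹ := by field
  have := mul_le_mul_of_nonneg_left (harmonic_le_one_add_log N) hC
  rw [sum_div_eq_add_sum_div_mul_add_one, ha₀]
  linarith

theorem sum_primesLE_log_div_le (N : ℕ) :
    ∑ p ∈ N.primesLE, Real.log p / p ≤ 2 * (2 + Real.log N) := by
  have log_four_le : Real.log 4 ≤ 2 := by
    rw [show (4 : ℝ) = 2 ^ 2 by norm_num, Real.log_pow, Nat.cast_ofNat]
    linarith [Real.log_two_lt_d9]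
  have theta_le (n : ℕ) :
      ∑ k ∈ range (n + 1), (if k.Prime then Real.log k else 0) ≤ 2 * n := by
    rw [← sum_filter, ← Nat.primesLE_eq_filter_range, ← Chebyshev.theta_eq_sum_primesLE_log]
    exact (Chebyshev.theta_le_log4_mul_x n.cast_nonneg).trans (by gcongr)
  have := sum_div_le_mul_two_add_log zero_le_two (by simp) theta_le N
  simpa only [Nat.primesLE_eq_filter_range, sum_filter, ite_div, zero_div] using this

theorem sum_one_div_sq_le (s : Finset ℕ) : ∑ k ∈ s, 1 / (k : ℝ) ^ 2 ≤ Real.pi ^ 2 / 6 :=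
  sum_le_hasSum s (fun _ _ => by positivity) hasSum_zeta_two

theorem log_le_prod_primesLE (N : ℕ) :
    Real.log N ≤ ∏ p ∈ N.primesLE, (1 - (p : ℝ)⁻¹)⁻¹ := by
  have euler := (EulerProduct.summable_and_hasSum_smoothNumbers_prod_primesBelow_geometric
    (f := invMonoidHom.comp (Nat.castRingHom ℝ : ℕ →* ℝ))
    (fun {p} hp => by simpa using inv_lt_one_of_one_lt₀ (Nat.one_lt_cast.2 hp.one_lt))
    (N + 1)).2
  have mem_smooth : ∀ m ∈ Icc 1 N, m ∈ (N + 1).smoothNumbers := fun m hm =>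
    Nat.mem_smoothNumbers_of_lt (mem_Icc.1 hm).1 (Nat.lt_succ_of_le (mem_Icc.1 hm).2)
  calc Real.log N ≤ harmonic N := by simpa using log_le_harmonic_floor N N.cast_nonneg
    _ = ∑ m ∈ Icc 1 N, (m : ℝ)⁻¹ := by rw [harmonic_eq_sum_Icc]; push_cast; rfl
    _ = ∑ m ∈ (Icc 1 N).subtype (· ∈ (N + 1).smoothNumbers), ((m : ℕ) : ℝ)⁻¹ :=
      (sum_subtype_of_mem (fun m : ℕ => (m : ℝ)⁻¹) mem_smooth).symm
    _ ≤ ∏ p ∈ N.primesLE, (1 - (p : ℝ)⁻¹)⁻¹ :=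
      sum_le_hasSum _ (fun _ _ => by simp) euler

theorem log_inv_one_sub_inv_le {x : ℝ} (hx : 2 ≤ x) :
    Real.log (1 - x⁻¹)⁻¹ ≤ 1 / x + 2 * (1 / x ^ 2) := by
  have hx1 : 0 < x - 1 := by linarith
  calc Real.log (1 - x⁻¹)⁻¹ = Real.log (x / (x - 1)) := by
        congr 1
        field
    _ ≤ x / (x - 1) - 1 := Real.log_le_sub_one_of_pos (by positivity)
    _ = 1 / (x - 1) := by field
    _ ≤ (x + 2) / x ^ 2 := by
        rw [div_le_div_iff₀ hx1 (by positivity)]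
        nlinarith
    _ = 1 / x + 2 * (1 / x ^ 2) := by field

theorem log_log_le_sum_primesLE_add {N : ℕ} (hN : 2 ≤ N) :
    Real.log (Real.log N) ≤ ∑ p ∈ N.primesLE, 1 / (p : ℝ) + Real.pi ^ 2 / 3 := by
  have two_le {p : ℕ} (hp : p ∈ N.primesLE) : (2 : ℝ) ≤ p :=
    mod_cast Nat.two_le_of_mem_primesLE hp
  have factor_ne_zero : ∀ p ∈ N.primesLE, (1 - (p : ℝ)⁻¹)⁻¹ ≠ 0 := fun p hp =>
    inv_ne_zero (sub_pos.2 (inv_lt_one_of_one_lt₀ (by linarith [two_le hp]))).ne'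
  calc Real.log (Real.log N)
      ≤ Real.log (∏ p ∈ N.primesLE, (1 - (p : ℝ)⁻¹)⁻¹) :=
        Real.log_le_log (Real.log_pos (mod_cast hN)) (log_le_prod_primesLE N)
    _ = ∑ p ∈ N.primesLE, Real.log (1 - (p : ℝ)⁻¹)⁻¹ := Real.log_prod factor_ne_zero
    _ ≤ ∑ p ∈ N.primesLE, (1 / (p : ℝ) + 2 * (1 / (p : ℝ) ^ 2)) :=
        sum_le_sum fun p hp => log_inv_one_sub_inv_le (two_le hp)
    _ ≤ ∑ p ∈ N.primesLE, 1 / (p : ℝ) + Real.pi ^ 2 / 3 := by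
        rw [sum_add_distrib, ← mul_sum]
        linarith [sum_one_div_sq_le N.primesLE]

theorem exp_sub_sq_le_one_add {x : ℝ} (hx : 0 ≤ x) : Real.exp (x - x ^ 2) ≤ 1 + x := by
  rw [← Real.le_log_iff_exp_le (by positivity)]
  refine le_trans ?_ (Real.one_sub_inv_le_log_of_pos (by positivity))
  rw [show 1 - (1 + x)⁻¹ = x / (1 + x) by field, le_div_iff₀ (by positivity)]
  nlinarith [pow_nonneg hx 3]

theorem exp_mul_sum_one_div_sub_le_prod (s : Finset ℕ) {η : ℝ} (hη : 0 ≤ η) :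
    Real.exp (η * ∑ k ∈ s, 1 / (k : ℝ) - η ^ 2 * (Real.pi ^ 2 / 6)) ≤
      ∏ k ∈ s, (1 + η / k) :=
  calc Real.exp (η * ∑ k ∈ s, 1 / (k : ℝ) - η ^ 2 * (Real.pi ^ 2 / 6))
      ≤ Real.exp (η * ∑ k ∈ s, 1 / (k : ℝ) - η ^ 2 * ∑ k ∈ s, 1 / (k : ℝ) ^ 2) := by
        gcongr
        exact sum_one_div_sq_le s
    _ = ∏ k ∈ s, Real.exp (η / k - (η / k) ^ 2) := by
        rw [← Real.exp_sum, sum_sub_distrib, mul_sum, mul_sum]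
        simp only [div_pow, mul_one_div]
    _ ≤ ∏ k ∈ s, (1 + η / k) :=
        prod_le_prod (fun _ _ => (Real.exp_pos _).le)
          fun k _ => exp_sub_sq_le_one_add (by positivity)

theorem sum_powerset_prod_mul_sum_le {ι : Type*} (A : Finset ι) {f g : ι → ℝ}
    (hf : ∀ i ∈ A, 0 ≤ f i) (hg : ∀ i ∈ A, 0 ≤ g i) :
    ∑ s ∈ A.powerset, (∏ i ∈ s, f i) * ∑ i ∈ s, g i ≤
      (∑ i ∈ A, f i * g i) * ∏ i ∈ A, (1 + f i) := by
  induction A using Finset.induction_on with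
  | empty => simp
  | insert a A ha ih =>
    obtain ⟨hfa, hfA⟩ := forall_mem_insert _ _ _ |>.1 hf
    obtain ⟨hga, hgA⟩ := forall_mem_insert _ _ _ |>.1 hg
    have insert_term : ∀ s ∈ A.powerset,
        (∏ i ∈ insert a s, f i) * ∑ i ∈ insert a s, g i =
          f a * g a * ∏ i ∈ s, f i + f a * ((∏ i ∈ s, f i) * ∑ i ∈ s, g i) := by
      intro s hs
      have has : a ∉ s := fun h => ha (mem_powerset.1 hs h)
      rw [prod_insert has, sum_insert has]
      ring
    rw [sum_powerset_insert ha, sum_congr rfl insert_term, sum_add_distrib, ← mul_sum, ← mul_sum,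
      ← prod_one_add, sum_insert ha, prod_insert ha]
    have total_nonneg : 0 ≤ ∏ i ∈ A, (1 + f i) :=
      prod_nonneg fun i hi => by linarith [hfA i hi]
    nlinarith [mul_le_mul_of_nonneg_left (ih hfA hgA) (by linarith : 0 ≤ 1 + f a),
      mul_nonneg (mul_nonneg (mul_nonneg hfa hga) hfa) total_nonneg]

theorem half_prod_one_add_le_sum_powerset_filter {ι : Type*} (A : Finset ι) {f g : ι → ℝ} {L : ℝ}
    (hf : ∀ i ∈ A, 0 ≤ f i) (hg : ∀ i ∈ A, 0 ≤ g i) (hL : 0 < L)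
    (hfg : ∑ i ∈ A, f i * g i ≤ L / 2) :
    (∏ i ∈ A, (1 + f i)) / 2 ≤ ∑ s ∈ A.powerset with ∑ i ∈ s, g i ≤ L, ∏ i ∈ s, f i := by
  have weight_nonneg : ∀ s ∈ A.powerset, 0 ≤ ∏ i ∈ s, f i := fun s hs =>
    prod_nonneg fun i hi => hf i (mem_powerset.1 hs hi)
  have prod_eq_sum := prod_one_add (f := f) A
  have total_nonneg : 0 ≤ ∏ i ∈ A, (1 + f i) := prod_eq_sum ▸ sum_nonneg weight_nonneg
  have markov : L * ∑ s ∈ A.powerset with ¬ ∑ i ∈ s, g i ≤ L, ∏ i ∈ s, f i ≤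
      L / 2 * ∏ i ∈ A, (1 + f i) :=
    calc L * ∑ s ∈ A.powerset with ¬ ∑ i ∈ s, g i ≤ L, ∏ i ∈ s, f i
        ≤ ∑ s ∈ A.powerset with ¬ ∑ i ∈ s, g i ≤ L, (∏ i ∈ s, f i) * ∑ i ∈ s, g i := by
          rw [mul_sum]
          refine sum_le_sum fun s hs => ?_
          obtain ⟨hsA, hsL⟩ := mem_filter.1 hs
          rw [mul_comm]
          exact mul_le_mul_of_nonneg_left (not_le.1 hsL).le (weight_nonneg s hsA)
      _ ≤ ∑ s ∈ A.powerset, (∏ i ∈ s, f i) * ∑ i ∈ s, g i :=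
          sum_le_sum_of_subset_of_nonneg (filter_subset _ _) fun s hs _ =>
            mul_nonneg (weight_nonneg s hs) (sum_nonneg fun i hi => hg i (mem_powerset.1 hs hi))
      _ ≤ (∑ i ∈ A, f i * g i) * ∏ i ∈ A, (1 + f i) := sum_powerset_prod_mul_sum_le A hf hg
      _ ≤ L / 2 * ∏ i ∈ A, (1 + f i) := by gcongr
  have split := sum_filter_add_sum_filter_not A.powerset (fun s => ∑ i ∈ s, g i ≤ L)
    (fun s => ∏ i ∈ s, f i)
  rw [← prod_eq_sum] at split
  nlinarith

/-- The elements of `S` up to `n`; for a set of primes, the finset counted by its density. -/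
noncomputable def elementsLE (S : Set ℕ) (n : ℕ) : Finset ℕ := {k ∈ range (n + 1) | k ∈ S}

theorem mem_elementsLE {S : Set ℕ} {n k : ℕ} : k ∈ elementsLE S n ↔ k ≤ n ∧ k ∈ S := by
  simp only [elementsLE, mem_filter, mem_range, Nat.lt_succ_iff]

theorem card_elementsLE_le_card_filter_lt_add (S : Set ℕ) (n N : ℕ) :
    #(elementsLE S n) ≤ #{k ∈ elementsLE S n | N < k} + (N + 1) := by
  rw [← card_filter_add_card_filter_not (s := elementsLE S n) (N < ·)]
  gcongr
  calc #{k ∈ elementsLE S n | ¬ N < k} ≤ #(range (N + 1)) :=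
        card_le_card fun k hk => mem_range.2 (Nat.lt_succ_of_le (not_lt.1 (mem_filter.1 hk).2))
    _ = N + 1 := card_range _

theorem eventually_mul_primeCounting_le_card_elementsLE {P : Set ℕ} {β δ : ℝ}
    (hdens : Tendsto (fun x : ℕ => (#(elementsLE P x) : ℝ) / #x.primesLE) atTop (nhds δ))
    (hβ : β < δ) : ∀ᶠ n : ℕ in atTop, β * π n ≤ #(elementsLE P n) := by
  filter_upwards [hdens.eventually_const_lt hβ, eventually_ge_atTop 2] with n hn hn₂
  have primesLE_pos : (0 : ℝ) < #n.primesLE :=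
    mod_cast card_pos.2 ⟨2, Nat.mem_primesLE.2 ⟨hn₂, Nat.prime_two⟩⟩
  rw [← Nat.primesLE_card_eq_primeCounting]
  exact ((lt_div_iff₀ primesLE_pos).1 hn).le

theorem eventually_div_log_le_primeCounting :
    ∀ᶠ x : ℝ in atTop, x / (4 * Real.log x) ≤ π ⌊x⌋₊ := by
  have log_shift_le : ∀ᶠ x : ℝ in atTop, Real.log (x + 2) ≤ 1 / 20 * (x + 2) := by
    filter_upwards [(tendsto_atTop_add_const_right atTop (2 : ℝ) tendsto_id).eventually
      (Real.isLittleO_log_id_atTop.bound (by norm_num : (0 : ℝ) < 1 / 20)),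
      eventually_ge_atTop 0] with x hx hx₀
    simpa [abs_of_nonneg (by linarith : 0 ≤ x + 2)] using (le_abs_self _).trans hx
  filter_upwards [log_shift_le, eventually_ge_atTop 10] with x hlog hx
  have log_pos : 0 < Real.log x := Real.log_pos (by linarith)
  calc x / (4 * Real.log x) = x / 4 / Real.log x := by rw [div_div]
    _ ≤ ((x - 1) * Real.log 2 - Real.log (x + 2)) / Real.log x := by
      gcongr
      nlinarith [Real.log_two_gt_d9]
    _ ≤ π ⌊x⌋₊ := Chebyshev.pi_ge' (by linarith)

theorem eventually_sqrt_add_one_mul_log_le {ε : ℝ} (hε : 0 < ε) :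
    ∀ᶠ x : ℝ in atTop, (√x + 1) * Real.log x ≤ ε * x := by
  filter_upwards [(isLittleO_log_rpow_atTop one_half_pos).bound (half_pos hε),
    eventually_ge_atTop 1] with x hx hx₁
  have log_nonneg : 0 ≤ Real.log x := Real.log_nonneg hx₁
  have log_le : Real.log x ≤ ε / 2 * √x := by
    rw [← Real.sqrt_eq_rpow, Real.norm_of_nonneg log_nonneg,
      Real.norm_of_nonneg (Real.sqrt_nonneg x)] at hx
    exact hx
  have one_le_sqrt : 1 ≤ √x := Real.one_le_sqrt.2 hx₁
  calc (√x + 1) * Real.log x ≤ (√x + √x) * (ε / 2 * √x) := by gcongr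
    _ = ε * (√x * √x) := by ring
    _ = ε * x := by rw [Real.mul_self_sqrt (by linarith)]

section LowerDensity

variable {P : Set ℕ} {β : ℝ}

theorem eventually_div_log_le_card_filter_lt (hβ : 0 < β)
    (hcount : ∀ᶠ n : ℕ in atTop, β * π n ≤ #(elementsLE P n)) :
    ∀ᶠ y : ℝ in atTop, ∀ N : ℕ, N ≤ √y →
      β / 8 * (y / Real.log y) ≤ #{p ∈ elementsLE P ⌊y⌋₊ | N < p} := by
  filter_upwards [tendsto_nat_floor_atTop.eventually hcount, eventually_div_log_le_primeCounting,
    eventually_sqrt_add_one_mul_log_le (by positivity : 0 < β / 8), eventually_gt_atTop 1]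
    with y hP hpi hsqrt hy N hN
  have log_pos : 0 < Real.log y := Real.log_pos hy
  have small_le : (N : ℝ) + 1 ≤ β / 8 * (y / Real.log y) :=
    calc (N : ℝ) + 1 ≤ √y + 1 := by gcongr
      _ ≤ β / 8 * (y / Real.log y) := by rwa [← mul_div_assoc, le_div_iff₀ log_pos]
  have total_ge : β / 4 * (y / Real.log y) ≤ #(elementsLE P ⌊y⌋₊) :=
    calc β / 4 * (y / Real.log y) = β * (y / (4 * Real.log y)) := by field
      _ ≤ β * π ⌊y⌋₊ := by gcongr
      _ ≤ #(elementsLE P ⌊y⌋₊) := hP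
  have split : (#(elementsLE P ⌊y⌋₊) : ℝ) ≤ #{p ∈ elementsLE P ⌊y⌋₊ | N < p} + (N + 1) :=
    mod_cast card_elementsLE_le_card_filter_lt_add P ⌊y⌋₊ N
  linarith

theorem exists_eventually_mul_log_log_sub_le_sum_one_div (hβ : 0 ≤ β)
    (hcount : ∀ᶠ n : ℕ in atTop, β * π n ≤ #(elementsLE P n)) :
    ∃ C : ℝ, ∀ᶠ N : ℕ in atTop,
      β * Real.log (Real.log N) - C ≤ ∑ p ∈ elementsLE P N, 1 / (p : ℝ) := by
  let a : ℕ → ℝ := fun k => (if k ∈ P then 1 else 0) - β * (if k.Prime then 1 else 0)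
  have sum_a (n : ℕ) : ∑ k ∈ range (n + 1), a k = #(elementsLE P n) - β * π n := by
    rw [sum_sub_distrib, ← mul_sum, sum_boole, sum_boole, ← Nat.primesLE_card_eq_primeCounting]
    rfl
  have sum_a_div (n : ℕ) : ∑ k ∈ range (n + 1), a k / k =
      ∑ p ∈ elementsLE P n, 1 / (p : ℝ) - β * ∑ p ∈ n.primesLE, 1 / (p : ℝ) := by
    simp only [a, sub_div, mul_div_assoc, ite_div, zero_div, sum_sub_distrib, ← mul_sum,
      elementsLE, Nat.primesLE_eq_filter_range, sum_filter]
  obtain ⟨C, hC⟩ := exists_eventually_le_sum_div (a := a)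
    (hcount.mono fun n hn => by rw [sum_a]; exact sub_nonneg.2 hn)
  refine ⟨β * (Real.pi ^ 2 / 3) - C, ?_⟩
  filter_upwards [hC, eventually_ge_atTop 2] with N hN hN₂
  rw [sum_a_div] at hN
  linarith [mul_le_mul_of_nonneg_left (log_log_le_sum_primesLE_add hN₂) hβ]

theorem exists_eventually_mul_log_rpow_le_prod_one_add_div (hβ : 0 ≤ β)
    (hcount : ∀ᶠ n : ℕ in atTop, β * π n ≤ #(elementsLE P n)) {η : ℝ} (hη : 0 ≤ η) :
    ∃ c : ℝ, 0 < c ∧ ∀ᶠ N : ℕ in atTop,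
      c * Real.log N ^ (β * η) ≤ ∏ p ∈ elementsLE P N, (1 + η / p) := by
  obtain ⟨C, hC⟩ := exists_eventually_mul_log_log_sub_le_sum_one_div hβ hcount
  refine ⟨Real.exp (-(η * C) - η ^ 2 * (Real.pi ^ 2 / 6)), Real.exp_pos _, ?_⟩
  filter_upwards [hC, eventually_ge_atTop 2] with N hN hN₂
  have log_pos : 0 < Real.log N := Real.log_pos (mod_cast hN₂)
  refine le_trans ?_ (exp_mul_sum_one_div_sub_le_prod _ hη)
  rw [Real.rpow_def_of_pos log_pos, ← Real.exp_add, Real.exp_le_exp]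
  linarith [mul_le_mul_of_nonneg_left hN hη]

end LowerDensity

/-- The sum of `η ^ ω(q)` over the squarefree `q ≤ Q` composed of primes in `P`. -/
noncomputable def squarefreeSum (P : Set ℕ) (η Q : ℝ) : ℝ :=
  ∑ q ∈ range (⌊Q⌋₊ + 1) with Squarefree q ∧ ∀ p ∈ q.primeFactors, p ∈ P,
    η ^ #q.primeFactors

theorem squarefree_prod_of_forall_prime {s : Finset ℕ} (hs : ∀ p ∈ s, p.Prime) :
    Squarefree (∏ p ∈ s, p) :=
  squarefree_prod_of_pairwise_isCoprime
    (fun p hp q hq hpq =>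
      Nat.coprime_iff_isRelPrime.1 ((Nat.coprime_primes (hs p hp) (hs q hq)).2 hpq))
    fun p hp => (hs p hp).squarefree

theorem insert_eq_insert_iff_of_forall_le_of_lt {α : Type*} [LinearOrder α] {s t : Finset α}
    {p q N : α} (hs : ∀ x ∈ s, x ≤ N) (ht : ∀ x ∈ t, x ≤ N) (hp : N < p) (hq : N < q) :
    insert p s = insert q t ↔ p = q ∧ s = t := by
  refine ⟨fun h => ?_, by rintro ⟨rfl, rfl⟩; rfl⟩
  have hps : p ∉ s := fun hmem => (hs p hmem).not_gt hp
  have hpt : p ∉ t := fun hmem => (ht p hmem).not_gt hp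
  obtain rfl : p = q := (mem_insert.1 (h ▸ mem_insert_self p s)).resolve_right hpt
  exact ⟨rfl, by rw [← erase_insert hps, h, erase_insert hpt]⟩

theorem sum_pow_card_add_one_mul_card_eq_sum_image {α R : Type*} [LinearOrder α] [CommSemiring R]
    (η : R) {N : α} {B : Finset (Finset α)} {D : Finset α → Finset α}
    (hB : ∀ s ∈ B, ∀ q ∈ s, q ≤ N) (hD : ∀ s ∈ B, ∀ p ∈ D s, N < p) :
    ∑ s ∈ B, η ^ (#s + 1) * #(D s) =
      ∑ t ∈ (B.sigma D).image fun x => insert x.2 x.1, η ^ #t := by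
  have insert_injOn : Set.InjOn (fun x : (_ : Finset α) × α => insert x.2 x.1) (B.sigma D) := by
    rintro ⟨s, p⟩ hx ⟨t, q⟩ hy hxy
    obtain ⟨hs, hp⟩ := mem_sigma.1 hx
    obtain ⟨ht, hq⟩ := mem_sigma.1 hy
    obtain ⟨rfl, rfl⟩ := (insert_eq_insert_iff_of_forall_le_of_lt (hB s hs) (hB t ht)
      (hD s hs p hp) (hD t ht q hq)).1 hxy
    rfl
  rw [sum_image insert_injOn, sum_sigma]
  refine sum_congr rfl fun s hs => ?_
  have card_insert : ∀ p ∈ D s, η ^ #(insert p s) = η ^ (#s + 1) := fun p hp => by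
    rw [card_insert_of_notMem fun hps => (hB s hs p hps).not_gt (hD s hs p hp)]
  rw [sum_congr rfl card_insert, sum_const, nsmul_eq_mul, mul_comm]

section SquarefreeSum

variable {P : Set ℕ} {η Q : ℝ}

theorem sum_pow_card_le_squarefreeSum (hP : ∀ p ∈ P, p.Prime) (hη : 0 ≤ η)
    (T : Finset (Finset ℕ)) (hTP : ∀ t ∈ T, ∀ p ∈ t, p ∈ P)
    (hTQ : ∀ t ∈ T, ((∏ p ∈ t, p : ℕ) : ℝ) ≤ Q) :
    ∑ t ∈ T, η ^ #t ≤ squarefreeSum P η Q := by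
  have primeFactors_prod : ∀ t ∈ T, (∏ p ∈ t, p).primeFactors = t := fun t ht =>
    Nat.primeFactors_prod fun p hp => hP p (hTP t ht p hp)
  have prod_injOn : Set.InjOn (fun t : Finset ℕ => ∏ p ∈ t, p) T := fun s hs t ht hst => by
    rw [← primeFactors_prod s hs, ← primeFactors_prod t ht]
    exact congrArg Nat.primeFactors hst
  calc ∑ t ∈ T, η ^ #t = ∑ t ∈ T, η ^ #(∏ p ∈ t, p).primeFactors :=
        sum_congr rfl fun t ht => by rw [primeFactors_prod t ht]
    _ = ∑ q ∈ T.image fun t => ∏ p ∈ t, p, η ^ #q.primeFactors := by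
        rw [sum_image prod_injOn]
    _ ≤ squarefreeSum P η Q := by
        refine sum_le_sum_of_subset_of_nonneg (fun q hq => ?_) fun _ _ _ => by positivity
        obtain ⟨t, ht, rfl⟩ := mem_image.1 hq
        rw [mem_filter, mem_range, Nat.lt_succ_iff, primeFactors_prod t ht]
        exact ⟨Nat.le_floor (hTQ t ht),
          squarefree_prod_of_forall_prime fun p hp => hP p (hTP t ht p hp), hTP t ht⟩

theorem sum_pow_mul_card_le_squarefreeSum (hP : ∀ p ∈ P, p.Prime) (hη : 0 ≤ η) (hQ : 0 ≤ Q)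
    {N : ℕ} {B : Finset (Finset ℕ)} (hB : ∀ s ∈ B, s ⊆ elementsLE P N) :
    ∑ s ∈ B, η ^ (#s + 1) *
        #{p ∈ elementsLE P ⌊Q / ((∏ p ∈ s, p : ℕ) : ℝ)⌋₊ | N < p} ≤ squarefreeSum P η Q := by
  have le_N : ∀ s ∈ B, ∀ q ∈ s, q ≤ N := fun s hs q hq => (mem_elementsLE.1 (hB s hs hq)).1
  have mem_P : ∀ s ∈ B, ∀ q ∈ s, q ∈ P := fun s hs q hq => (mem_elementsLE.1 (hB s hs hq)).2
  rw [sum_pow_card_add_one_mul_card_eq_sum_image η le_N fun s _ p hp => (mem_filter.1 hp).2]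
  refine sum_pow_card_le_squarefreeSum hP hη _ ?_ ?_ <;>
    refine forall_mem_image.2 fun ⟨s, p⟩ hx => ?_ <;>
    obtain ⟨hs, hp⟩ := mem_sigma.1 hx <;>
    obtain ⟨hp, hNp⟩ := mem_filter.1 hp <;>
    obtain ⟨hpQ, hpP⟩ := mem_elementsLE.1 hp
  · exact forall_mem_insert _ _ _ |>.2 ⟨hpP, mem_P s hs⟩
  · have prod_pos : (0 : ℝ) < (∏ q ∈ s, q : ℕ) :=
      mod_cast prod_pos fun q hq => (hP q (mem_P s hs q hq)).pos
    rw [prod_insert fun hps => (le_N s hs p hps).not_gt hNp, Nat.cast_mul,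
      ← le_div_iff₀ prod_pos]
    exact (Nat.le_floor_iff (by positivity)).1 hpQ

theorem mul_sum_prod_div_le_squarefreeSum (hP : ∀ p ∈ P, p.Prime) (hη : 0 ≤ η) {c : ℝ}
    (hc : 0 ≤ c) (hQ : 1 < Q) {N : ℕ}
    (hcard : ∀ y, √Q ≤ y → c * (y / Real.log y) ≤ #{p ∈ elementsLE P ⌊y⌋₊ | N < p})
    {B : Finset (Finset ℕ)} (hB : ∀ s ∈ B, s ⊆ elementsLE P N)
    (hBQ : ∀ s ∈ B, ((∏ p ∈ s, p : ℕ) : ℝ) ≤ √Q) :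
    η * c * (Q / Real.log Q) * ∑ s ∈ B, ∏ p ∈ s, (η / p) ≤ squarefreeSum P η Q := by
  refine le_trans ?_ (sum_pow_mul_card_le_squarefreeSum hP hη (by linarith) hB)
  rw [mul_sum]
  refine sum_le_sum fun s hs => ?_
  set m : ℝ := ((∏ p ∈ s, p : ℕ) : ℝ) with hm
  have one_le_m : 1 ≤ m := Nat.one_le_cast.2 (Nat.one_le_iff_ne_zero.2
    (prod_ne_zero_iff.2 fun p hp => (hP p (mem_elementsLE.1 (hB s hs hp)).2).ne_zero))
  have sqrt_le : √Q ≤ Q / m := by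
    rw [le_div_iff₀ (by positivity)]
    calc √Q * m ≤ √Q * √Q := by gcongr; exact hBQ s hs
      _ = Q := Real.mul_self_sqrt (by linarith)
  have one_lt_quot : 1 < Q / m := (Real.lt_sqrt_of_sq_lt (by simpa using hQ)).trans_le sqrt_le
  have log_quot_pos : 0 < Real.log (Q / m) := Real.log_pos one_lt_quot
  have quot_le : Q / m ≤ Q := div_le_self (by linarith) one_le_m
  calc η * c * (Q / Real.log Q) * ∏ p ∈ s, (η / p)
      = η ^ (#s + 1) * (c * (Q / m / Real.log Q)) := by
        rw [prod_div_distrib, prod_const, ← Nat.cast_prod, ← hm]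
        ring
    _ ≤ η ^ (#s + 1) * (c * (Q / m / Real.log (Q / m))) := by gcongr
    _ ≤ η ^ (#s + 1) * #{p ∈ elementsLE P ⌊Q / m⌋₊ | N < p} := by
        gcongr
        exact hcard _ sqrt_le

theorem mul_prod_one_add_div_le_squarefreeSum (hP : ∀ p ∈ P, p.Prime) (hη : 0 ≤ η) {c : ℝ}
    (hc : 0 ≤ c) (hQ : 1 < Q) {N : ℕ}
    (hcard : ∀ y, √Q ≤ y → c * (y / Real.log y) ≤ #{p ∈ elementsLE P ⌊y⌋₊ | N < p})
    (hsum : η * ∑ p ∈ elementsLE P N, Real.log p / p ≤ Real.log Q / 4) :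
    η * c * (Q / Real.log Q) * ((∏ p ∈ elementsLE P N, (1 + η / p)) / 2) ≤
      squarefreeSum P η Q := by
  have log_Q_pos : 0 < Real.log Q := Real.log_pos hQ
  have log_prod_le_iff {s : Finset ℕ} (hs : s ⊆ elementsLE P N) :
      ∑ p ∈ s, Real.log p ≤ Real.log Q / 2 ↔ ((∏ p ∈ s, p : ℕ) : ℝ) ≤ √Q := by
    have ne_zero : ∀ p ∈ s, (p : ℝ) ≠ 0 := fun p hp =>
      Nat.cast_ne_zero.2 (hP p (mem_elementsLE.1 (hs hp)).2).ne_zero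
    rw [← Real.log_prod ne_zero, ← Real.log_sqrt (by linarith), Nat.cast_prod,
      Real.log_le_log_iff (prod_pos fun p hp => (Nat.cast_nonneg p).lt_of_ne' (ne_zero p hp))
        (Real.sqrt_pos.2 (by linarith))]
  have markov := half_prod_one_add_le_sum_powerset_filter (elementsLE P N)
    (f := fun p => η / p) (g := fun p => Real.log p) (L := Real.log Q / 2)
    (fun p _ => by positivity) (fun p _ => Real.log_natCast_nonneg p) (by positivity)
    (by
      rw [mul_sum] at hsum
      convert hsum using 1
      · exact sum_congr rfl fun p _ => by ring
      · ring)
  refine le_trans (mul_le_mul_of_nonneg_left markov (by positivity))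
    (mul_sum_prod_div_le_squarefreeSum hP hη hc hQ hcard ?_ ?_)
  · exact fun s hs => mem_powerset.1 (mem_filter.1 hs).1
  · exact fun s hs => (log_prod_le_iff (mem_powerset.1 (mem_filter.1 hs).1)).1 (mem_filter.1 hs).2

end SquarefreeSum

theorem log_floor_rpow_le {x : ℝ} (hx : 1 ≤ x) {κ : ℝ} (hκ : 0 ≤ κ) :
    Real.log ⌊x ^ κ⌋₊ ≤ κ * Real.log x := by
  have one_le : 1 ≤ x ^ κ := Real.one_le_rpow hx hκ
  rw [← Real.log_rpow (by linarith)]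
  exact Real.log_le_log (mod_cast Nat.floor_pos.2 one_le) (Nat.floor_le (by linarith))

theorem eventually_mul_log_le_log_floor_rpow {κ : ℝ} (hκ : 0 < κ) :
    ∀ᶠ x : ℝ in atTop, κ / 2 * Real.log x ≤ Real.log ⌊x ^ κ⌋₊ := by
  filter_upwards [(tendsto_rpow_atTop (half_pos hκ)).eventually_ge_atTop 2,
    eventually_gt_atTop 0] with x hx hx₀
  rw [← Real.log_rpow hx₀]
  refine Real.log_le_log (by positivity) ?_
  have square : x ^ κ = x ^ (κ / 2) * x ^ (κ / 2) := by rw [← Real.rpow_add hx₀, add_halves]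
  nlinarith [Nat.lt_floor_add_one (x ^ κ)]

theorem floor_rpow_le_sqrt_sqrt {x : ℝ} (hx : 1 ≤ x) {κ : ℝ} (hκ : κ ≤ 1 / 4) :
    (⌊x ^ κ⌋₊ : ℝ) ≤ √√x :=
  calc (⌊x ^ κ⌋₊ : ℝ) ≤ x ^ κ := Nat.floor_le (by positivity)
    _ ≤ x ^ (1 / 4 : ℝ) := Real.rpow_le_rpow_of_exponent_le hx hκ
    _ = √√x := by
      rw [Real.sqrt_eq_rpow, Real.sqrt_eq_rpow, ← Real.rpow_mul (by linarith)]
      norm_num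

theorem eventually_mul_sum_log_div_le_log_div_four {P : Set ℕ} (hP : ∀ p ∈ P, p.Prime)
    {η κ : ℝ} (hη : 0 ≤ η) (hκ : 0 ≤ κ) (hηκ : η * κ ≤ 1 / 16) :
    ∀ᶠ Q : ℝ in atTop,
      η * ∑ p ∈ elementsLE P ⌊Q ^ κ⌋₊, Real.log p / p ≤ Real.log Q / 4 := by
  filter_upwards [eventually_ge_atTop 1, Real.tendsto_log_atTop.eventually_ge_atTop (32 * η)]
    with Q hQ hlogQ
  have sum_le : ∑ p ∈ elementsLE P ⌊Q ^ κ⌋₊, Real.log p / p ≤ 2 * (2 + κ * Real.log Q) :=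
    calc ∑ p ∈ elementsLE P ⌊Q ^ κ⌋₊, Real.log p / p
        ≤ ∑ p ∈ Nat.primesLE ⌊Q ^ κ⌋₊, Real.log p / p := by
          refine sum_le_sum_of_subset_of_nonneg (fun p hp => ?_) fun p _ _ => by positivity
          obtain ⟨hpN, hpP⟩ := mem_elementsLE.1 hp
          exact Nat.mem_primesLE.2 ⟨hpN, hP p hpP⟩
      _ ≤ 2 * (2 + Real.log ⌊Q ^ κ⌋₊) := sum_primesLE_log_div_le _
      _ ≤ 2 * (2 + κ * Real.log Q) := by
          gcongr
          exact log_floor_rpow_le hQ hκ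
  nlinarith [mul_le_mul_of_nonneg_left sum_le hη,
    mul_le_mul_of_nonneg_right hηκ (Real.log_nonneg hQ)]

theorem exists_eventually_le_squarefreeSum {P : Set ℕ} (hP : ∀ p ∈ P, p.Prime) {β : ℝ}
    (hβ : 0 < β) (hcount : ∀ᶠ n : ℕ in atTop, β * π n ≤ #(elementsLE P n)) {η : ℝ}
    (hη : 0 < η) :
    ∃ c : ℝ, 0 < c ∧ ∀ᶠ Q : ℝ in atTop,
      c * Q * Real.log Q ^ (β * η - 1) ≤ squarefreeSum P η Q := by
  obtain ⟨c, hc, hprod⟩ := exists_eventually_mul_log_rpow_le_prod_one_add_div hβ.le hcount hη.le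
  set κ : ℝ := min (1 / 4) (1 / (16 * η))
  have κ_pos : 0 < κ := by positivity
  have hηκ : η * κ ≤ 1 / 16 :=
    calc η * κ ≤ η * (1 / (16 * η)) := by gcongr; exact min_le_right _ _
      _ = 1 / 16 := by field
  refine ⟨η * (β / 8) * (c * (κ / 2) ^ (β * η) / 2), by positivity, ?_⟩
  filter_upwards [eventually_gt_atTop 1,
    Real.tendsto_sqrt_atTop.eventually
      (eventually_forall_ge_atTop.2 (eventually_div_log_le_card_filter_lt hβ hcount)),
    (tendsto_nat_floor_atTop.comp (tendsto_rpow_atTop κ_pos)).eventually hprod,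
    eventually_mul_log_le_log_floor_rpow κ_pos,
    eventually_mul_sum_log_div_le_log_div_four hP hη.le κ_pos.le hηκ]
    with Q hQ hcard hprodQ hlog hsum
  have log_pos : 0 < Real.log Q := Real.log_pos hQ
  have floor_le : ∀ y, √Q ≤ y → (⌊Q ^ κ⌋₊ : ℝ) ≤ √y := fun y hy =>
    (floor_rpow_le_sqrt_sqrt hQ.le (min_le_left _ _)).trans (Real.sqrt_le_sqrt hy)
  calc η * (β / 8) * (c * (κ / 2) ^ (β * η) / 2) * Q * Real.log Q ^ (β * η - 1)
      = η * (β / 8) * (Q / Real.log Q) * (c * (κ / 2 * Real.log Q) ^ (β * η) / 2) := by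
        rw [Real.rpow_sub_one log_pos.ne', Real.mul_rpow (by positivity) log_pos.le]
        ring
    _ ≤ η * (β / 8) * (Q / Real.log Q) *
          ((∏ p ∈ elementsLE P ⌊Q ^ κ⌋₊, (1 + η / p)) / 2) := by
        gcongr
        exact (by gcongr : _ ≤ c * Real.log ⌊Q ^ κ⌋₊ ^ (β * η)).trans hprodQ
    _ ≤ squarefreeSum P η Q :=
        mul_prod_one_add_div_le_squarefreeSum hP hη.le (by positivity) hQ
          (fun y hy => hcard y hy _ (floor_le y hy)) hsum

theorem stmt4_general {P : Set ℕ} (hP : ∀ p ∈ P, p.Prime) {β : ℝ} (hβ : 0 < β)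
    (hcount : ∀ᶠ n : ℕ in atTop, β * π n ≤ #(elementsLE P n)) {η : ℝ} (hη : 0 < η) :
    ∃ c : ℝ, 0 < c ∧ ∃ Q₀ : ℝ, 3 ≤ Q₀ ∧ ∀ Q : ℝ, Q₀ ≤ Q →
      c * Q * Real.log Q ^ (β * η - 1) ≤ squarefreeSum P η Q := by
  obtain ⟨c, hc, hbound⟩ := exists_eventually_le_squarefreeSum hP hβ hcount hη
  obtain ⟨Q₀, hQ₀⟩ := eventually_atTop.1 hbound
  exact ⟨c, hc, max 3 Q₀, le_max_left _ _, fun Q hQ => hQ₀ Q ((le_max_right _ _).trans hQ)⟩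

/-- If `P` is a set of primes with natural density `δ ∈ (0,1]` and `η > 0`, then for every
`ε ∈ (0,1)` there exist `c > 0` and `Q₀ ≥ 3` such that for all `Q ≥ Q₀`,
`∑_{q ≤ Q squarefree, all prime factors in P} η^(ω(q)) ≥ c·Q·(log Q)^((1−ε)δη − 1)`. -/
theorem stmt4 (P : Set ℕ) (hP : ∀ p ∈ P, p.Prime) (δ : ℝ) (hδ0 : 0 < δ) (hδ1 : δ ≤ 1)
    (hdens : Tendsto (fun x : ℕ =>
        (((Finset.range (x + 1)).filter (· ∈ P)).card : ℝ) /
          (((Finset.range (x + 1)).filter Nat.Prime).card : ℝ)) atTop (nhds δ))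
    (η : ℝ) (hη : 0 < η) :
    ∀ ε : ℝ, 0 < ε → ε < 1 → ∃ c : ℝ, 0 < c ∧ ∃ Q₀ : ℝ, 3 ≤ Q₀ ∧ ∀ Q : ℝ, Q₀ ≤ Q →
      c * Q * Real.log Q ^ ((1 - ε) * δ * η - 1) ≤
        ∑ q ∈ (Finset.range (⌊Q⌋₊ + 1)).filter
            (fun q => Squarefree q ∧ ∀ p ∈ q.primeFactors, p ∈ P),
          η ^ q.primeFactors.card := by
  intro ε hε hε1
  exact stmt4_general hP (mul_pos (sub_pos.2 hε1) hδ0)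
    (eventually_mul_primeCounting_le_card_elementsLE hdens (by nlinarith)) hη
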